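/- The permutations x = (1 5)(3 7), y = (2 3)(6 7), z = (4 6)(5 7) of the 7-element set {1,...,7} generate a group isomorphic to PSL(3,2) (equivalently, a simple group of order 168). -/

import Mathlib

open scoped MatrixGroups

/-- The involution `x = (1 5)(3 7)` (points of `{1,…,7}` encoded as `0,…,6` in `Fin 7`). -/
def xPerm : Equiv.Perm (Fin 7) := Equiv.swap 0 4 * Equiv.swap 2 6

/-- The involution `y = (2 3)(6 7)`. -/
def yPerm : Equiv.Perm (Fin 7) := Equiv.swap 1 2 * Equiv.swap 5 6

/-- The involution `z = (4 6)(5 7)`. -/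
def zPerm : Equiv.Perm (Fin 7) := Equiv.swap 3 5 * Equiv.swap 4 6

open Matrix MulAction Projectivization

open scoped LinearAlgebra.Projectivization

/-- Over `ZMod 2` the special linear group is generated by the transvections `1 + E i j`. -/
lemma specialLinearGroup_zmod_two_eq_top_of_transvection_mem {ι : Type*} [Fintype ι] [DecidableEq ι]
    {H : Subgroup (SpecialLinearGroup ι (ZMod 2))}
    (hH : ∀ (i j : ι) (hij : i ≠ j), SpecialLinearGroup.transvection hij (1 : ZMod 2) ∈ H) :
    H = ⊤ := by
  rw [Subgroup.eq_top_iff']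
  rintro ⟨M, hM⟩
  obtain ⟨A, hA, hAM⟩ : ∃ A ∈ H, (A : Matrix ι ι (ZMod 2)) = M := by
    refine diagonal_transvection_induction_of_det_ne_zero (fun M ↦ ∃ A ∈ H, A.1 = M) M
      (by simp [hM]) (fun D hD ↦ ⟨1, H.one_mem, ?_⟩) (fun t ↦ ?_) ?_
    · rw [det_diagonal, Finset.prod_ne_zero_iff] at hD
      have hone : D = 1 := funext fun i ↦
        (by decide : ∀ a : ZMod 2, a ≠ 0 → a = 1) _ (hD i (Finset.mem_univ i))
      simp [hone]
    · obtain ⟨i, j, hij, c⟩ := t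
      refine ⟨SpecialLinearGroup.transvection hij c, ?_, rfl⟩
      obtain rfl | rfl := (by decide : ∀ a : ZMod 2, a = 0 ∨ a = 1) c
      · simp [H.one_mem]
      · exact hH i j hij
    · rintro _ _ _ _ ⟨A, hA, rfl⟩ ⟨B, hB, rfl⟩
      exact ⟨A * B, H.mul_mem hA hB, rfl⟩
  rwa [show (⟨M, hM⟩ : SpecialLinearGroup ι (ZMod 2)) = A from Subtype.ext hAM.symm]

open scoped commutatorElement in
/-- The elementary commutator relation between transvections. -/
lemma transvection_eq_commutator {ι R : Type*} [Fintype ι] [DecidableEq ι] [CommRing R]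
    {i j k : ι} (hik : i ≠ k) (hkj : k ≠ j) (hij : i ≠ j) (a b : R) :
    ⁅SpecialLinearGroup.transvection hik a, SpecialLinearGroup.transvection hkj b⁆ =
      SpecialLinearGroup.transvection hij (a * b) := by
  rw [commutatorElement_def, mul_inv_eq_iff_eq_mul, mul_inv_eq_iff_eq_mul]
  apply Subtype.ext
  simp [SpecialLinearGroup.transvection_coe, mul_add, add_mul, hkj.symm, hij.symm]
  abel

section Simple

variable {ι : Type*} [Fintype ι] [DecidableEq ι]

/-- The special linear group over `ZMod 2` is perfect in dimension at least three. -/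
lemma specialLinearGroup_zmod_two_isPerfect (hι : 3 ≤ Fintype.card ι) :
    Group.IsPerfect (SpecialLinearGroup ι (ZMod 2)) where
  commutator_eq_top := by
    refine specialLinearGroup_zmod_two_eq_top_of_transvection_mem fun i j hij ↦ ?_
    obtain ⟨k, hk⟩ : ∃ k, k ∉ ({i, j} : Finset ι) := by
      by_contra! h
      have := Finset.card_le_card (Finset.subset_iff.2 fun k (_ : k ∈ Finset.univ) ↦ h k)
      rw [Finset.card_univ] at this
      have := Finset.card_le_two (a := i) (b := j)
      omega
    simp only [Finset.mem_insert, Finset.mem_singleton, not_or] at hk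
    rw [← mul_one (1 : ZMod 2), ← transvection_eq_commutator (Ne.symm hk.1) hk.2 hij]
    exact Subgroup.commutator_mem_commutator (Subgroup.mem_top _) (Subgroup.mem_top _)

/-- The transvection groups attached to the points of projective space over `ZMod 2` form an
Iwasawa structure for the projective special linear group. -/
noncomputable def pslIwasawaZModTwo :
    IwasawaStructure (ProjectiveSpecialLinearGroup ι (ZMod 2)) (ℙ (ZMod 2) (ι → ZMod 2)) where
  T := PSL.iwasawaT
  is_comm p := by
    have : IsMulCommutative (SpecialLinearGroup.lineStab p.submodule) := by
      rw [← p.mk_rep, submodule_mk]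
      exact SpecialLinearGroup.lineStab_isMulCommutative_of_span p.rep p.rep_nonzero
    exact Subgroup.map_isMulCommutative _ _
  is_conj g p := by
    obtain ⟨A, rfl⟩ := QuotientGroup.mk_surjective g
    rw [ProjectiveSpecialLinearGroup.smul_proj_mk, PSL.iwasawaT, PSL.smul_submodule,
      SpecialLinearGroup.lineStab_smul, PSL.iwasawaT_map_conj]
  is_generator := by
    have h : ⨆ p : ℙ (ZMod 2) (ι → ZMod 2), SpecialLinearGroup.lineStab p.submodule = ⊤ := by
      refine specialLinearGroup_zmod_two_eq_top_of_transvection_mem fun i j hij ↦ ?_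
      refine Subgroup.mem_iSup_of_mem
        (mk (ZMod 2) (Pi.single i 1) (Pi.single_ne_zero_iff.2 one_ne_zero)) ?_
      rw [submodule_mk]
      exact SL2Gen.transvection_mem_lineStab hij 1
    rw [← Subgroup.map_iSup, h]
    exact Subgroup.map_top_of_surjective _ (QuotientGroup.mk'_surjective _)

/-- The projective special linear group over `ZMod 2` is simple in dimension at least three. -/
lemma projectiveSpecialLinearGroup_zmod_two_isSimpleGroup (hι : 3 ≤ Fintype.card ι) :
    IsSimpleGroup (ProjectiveSpecialLinearGroup ι (ZMod 2)) := by
  have : Nontrivial ι := Fintype.one_lt_card_iff_nontrivial.1 (by omega)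
  have := specialLinearGroup_zmod_two_isPerfect hι
  have : Group.IsPerfect (ProjectiveSpecialLinearGroup ι (ZMod 2)) := inferInstance
  exact IwasawaStructure.isSimpleGroup this.commutator_eq_top pslIwasawaZModTwo inferInstance

end Simple

/-- Over `ZMod 2` the general, special and projective special linear groups have the same order. -/
lemma card_projectiveSpecialLinearGroup_zmod_two (n : ℕ) [NeZero n] :
    Nat.card PSL(n, ZMod 2) = ∏ i : Fin n, (2 ^ n - 2 ^ (i : ℕ)) := by
  have hone : ∀ a : ZMod 2, a ≠ 0 → a = 1 := by decide
  have hcenter : Subgroup.center SL(n, ZMod 2) = ⊥ := by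
    refine (Subgroup.eq_bot_iff_forall _).2 fun A hA ↦ ?_
    obtain ⟨r, hr, hrA⟩ := Matrix.SpecialLinearGroup.mem_center_iff.1 hA
    have hr0 : r ≠ 0 := by
      rintro rfl
      simp [NeZero.ne n] at hr
    apply Subtype.ext
    simp [← hrA, hone r hr0]
  have hGL : Function.Bijective (SpecialLinearGroup.toGL (n := Fin n) (R := ZMod 2)) := by
    refine ⟨SpecialLinearGroup.toGL_injective, fun g ↦ ⟨⟨g.1, hone _ ?_⟩, Units.ext rfl⟩⟩
    exact ((isUnit_iff_isUnit_det _).1 g.isUnit).ne_zero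
  have hPSL : Nat.card PSL(n, ZMod 2) = Nat.card SL(n, ZMod 2) :=
    Nat.card_congr ((QuotientGroup.quotientMulEquivOfEq hcenter).trans
      QuotientGroup.quotientBot).toEquiv
  rw [hPSL, Nat.card_congr (Equiv.ofBijective _ hGL), card_GL_field, ZMod.card]

/-- The nonzero vector of `𝔽₂³` whose coordinates are the binary digits of `i + 1`. -/
def binaryVector (i : Fin 7) : Fin 3 → ZMod 2 :=
  fun k ↦ if (i.val + 1).testBit k then 1 else 0

lemma binaryVector_ne_zero (i : Fin 7) : binaryVector i ≠ 0 := by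
  revert i
  decide

lemma exists_binaryVector_eq {v : Fin 3 → ZMod 2} (hv : v ≠ 0) : ∃ i, binaryVector i = v := by
  revert v
  decide

/-- The points of the Fano plane, numbered by binary expansions. -/
noncomputable def fanoEquiv : Fin 7 ≃ ℙ (ZMod 2) (Fin 3 → ZMod 2) :=
  Equiv.ofBijective (fun i ↦ mk (ZMod 2) (binaryVector i) (binaryVector_ne_zero i)) <| by
    constructor
    · intro i j h
      rw [mk_eq_mk_iff'] at h
      revert i j
      decide
    · refine Projectivization.ind fun v hv ↦ ?_
      obtain ⟨i, rfl⟩ := exists_binaryVector_eq hv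
      exact ⟨i, rfl⟩

/-- The action of `PSL(3, 2)` on the seven points of the Fano plane. -/
noncomputable def fanoHom : PSL(3, ZMod 2) →* Equiv.Perm (Fin 7) :=
  fanoEquiv.symm.permCongrHom.toMonoidHom.comp PSLAction.toPermHom

lemma fanoHom_injective : Function.Injective fanoHom :=
  fanoEquiv.symm.permCongrHom.injective.comp ProjectiveSpecialLinearGroup.toPermHom_injective

lemma fanoHom_mk_eq {A : SL(3, ZMod 2)} {σ : Equiv.Perm (Fin 7)}
    (h : ∀ i, A.1 *ᵥ binaryVector i = binaryVector (σ i)) :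
    fanoHom (QuotientGroup.mk' _ A) = σ := by
  ext1 i
  change fanoEquiv.symm (A • fanoEquiv i) = σ i
  rw [Equiv.symm_apply_eq]
  change mk (ZMod 2) (A.1 *ᵥ binaryVector i) _ = mk (ZMod 2) (binaryVector (σ i)) _
  congr 1
  exact h i

open SpecialLinearGroup in
/-- Three transvections along a directed triangle generate `SL(3, 2)`. -/
lemma closure_cyclic_transvections_eq_top :
    Subgroup.closure {transvection (show (2 : Fin 3) ≠ 0 by decide) (1 : ZMod 2),
      transvection (show (0 : Fin 3) ≠ 1 by decide) (1 : ZMod 2),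
      transvection (show (1 : Fin 3) ≠ 2 by decide) (1 : ZMod 2)} = ⊤ := by
  set H := Subgroup.closure {transvection (show (2 : Fin 3) ≠ 0 by decide) (1 : ZMod 2),
      transvection (show (0 : Fin 3) ≠ 1 by decide) (1 : ZMod 2),
      transvection (show (1 : Fin 3) ≠ 2 by decide) (1 : ZMod 2)}
  have h20 : transvection (show (2 : Fin 3) ≠ 0 by decide) (1 : ZMod 2) ∈ H :=
    Subgroup.subset_closure (by simp)
  have h01 : transvection (show (0 : Fin 3) ≠ 1 by decide) (1 : ZMod 2) ∈ H :=
    Subgroup.subset_closure (by simp)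
  have h12 : transvection (show (1 : Fin 3) ≠ 2 by decide) (1 : ZMod 2) ∈ H :=
    Subgroup.subset_closure (by simp)
  have trans_mem {i j k : Fin 3} (hik : i ≠ k) (hkj : k ≠ j) (hij : i ≠ j)
      (h₁ : transvection hik (1 : ZMod 2) ∈ H) (h₂ : transvection hkj (1 : ZMod 2) ∈ H) :
      transvection hij (1 : ZMod 2) ∈ H := by
    rw [← mul_one (1 : ZMod 2), ← transvection_eq_commutator hik hkj hij, commutatorElement_def]
    exact H.mul_mem (H.mul_mem (H.mul_mem h₁ h₂) (H.inv_mem h₁)) (H.inv_mem h₂)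
  refine specialLinearGroup_zmod_two_eq_top_of_transvection_mem fun i j hij ↦ ?_
  fin_cases i <;> fin_cases j
  · exact absurd rfl hij
  · exact h01
  · exact trans_mem _ _ _ h01 h12
  · exact trans_mem _ _ _ h12 h20
  · exact absurd rfl hij
  · exact h12
  · exact h20
  · exact trans_mem _ _ _ h20 h01
  · exact absurd rfl hij

lemma range_fanoHom : fanoHom.range = Subgroup.closure {xPerm, yPerm, zPerm} := by
  have hsurj : Function.Surjective (QuotientGroup.mk' (Subgroup.center SL(3, ZMod 2))) :=
    QuotientGroup.mk'_surjective _
  rw [MonoidHom.range_eq_map, ← Subgroup.map_top_of_surjective _ hsurj, Subgroup.map_map,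
    ← closure_cyclic_transvections_eq_top, MonoidHom.map_closure]
  simp only [Set.image_insert_eq, Set.image_singleton, MonoidHom.comp_apply]
  rw [fanoHom_mk_eq (σ := xPerm) (by decide), fanoHom_mk_eq (σ := yPerm) (by decide),
    fanoHom_mk_eq (σ := zPerm) (by decide)]

theorem xyz_generate_psl32 :
    Nonempty ((Subgroup.closure {xPerm, yPerm, zPerm} : Subgroup (Equiv.Perm (Fin 7)))
        ≃* PSL(3, ZMod 2)) ∧
      IsSimpleGroup (Subgroup.closure {xPerm, yPerm, zPerm} : Subgroup (Equiv.Perm (Fin 7))) ∧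
      Nat.card (Subgroup.closure {xPerm, yPerm, zPerm} : Subgroup (Equiv.Perm (Fin 7))) = 168 := by
  have e : (Subgroup.closure {xPerm, yPerm, zPerm} : Subgroup (Equiv.Perm (Fin 7))) ≃*
      PSL(3, ZMod 2) :=
    ((MonoidHom.ofInjective fanoHom_injective).trans
      (MulEquiv.subgroupCongr range_fanoHom)).symm
  have := projectiveSpecialLinearGroup_zmod_two_isSimpleGroup (ι := Fin 3) (by simp)
  refine ⟨⟨e⟩, e.isSimpleGroup, ?_⟩
  rw [Nat.card_congr e.toEquiv, card_projectiveSpecialLinearGroup_zmod_two]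
  decide
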